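/- arXiv:1904.08096 — 2 statements merged into one kernel-verified Lean document; each statement's English description precedes it below -/
import Mathlib

section
/- Assume additionally that B_{∅,c} = 1 if c = ∅ and B_{∅,c} = 0 otherwise. Then a state (a,b) ∈ Finset Pk × Finset Pk is absorbing for the matrix S·U if and only if a = ∅; that is, the absorbing states of S·U are exactly the states of the form (∅, b). -/
open scoped Classical

/-!
`U` is the matrix of a map `u` on states, so the row of `S * U` at `s` is the image under `u` of the
row of `S` at `s`. States `(∅, b)` are absorbing for `S` and fixed by `u`. Conversely, let `s` be
absorbing for `S * U` with first component different from `∅`. The only possible preimage of `s`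
under `u` is `s` itself, and only when `s` is not saturated. Since `S` is nonnegative and the image
of its row at `s` is concentrated at `s`, the row itself is concentrated at `s`; thus `s` is
absorbing for `S`, hence saturated, a contradiction.
-/

section Absorbing

variable {n R : Type*} [DecidableEq n]

/-- Absorbing states of a square matrix, which is not required to be stochastic. -/
def IsAbsorbing [Zero R] [One R] (T : Matrix n n R) (s : n) : Prop :=
  ∀ t, T s t = if t = s then 1 else 0

variable (R) in
/-- The matrix of a Markov step that moves deterministically from `s` to `u s`. -/
def deterministicMatrix [Zero R] [One R] (u : n → n) : Matrix n n R :=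
  .of fun s t => if t = u s then 1 else 0

theorem isAbsorbing_deterministicMatrix [Zero R] [One R] {u : n → n} {s : n} (hs : u s = s) :
    IsAbsorbing (deterministicMatrix R u) s := by
  simp [IsAbsorbing, deterministicMatrix, hs]

variable [Fintype n] [Semiring R] {T T' : Matrix n n R} {u : n → n} {s t : n}

theorem IsAbsorbing.mul (hT : IsAbsorbing T s) (hT' : IsAbsorbing T' s) :
    IsAbsorbing (T * T') s := by
  intro t
  simp [Matrix.mul_apply, hT _, hT' t]

theorem IsAbsorbing.pow (hT : IsAbsorbing T s) (k : ℕ) : IsAbsorbing (T ^ k) s := by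
  induction k with
  | zero => simp [IsAbsorbing, Matrix.one_apply, eq_comm]
  | succ k ih => rw [pow_succ]; exact ih.mul hT

theorem mul_deterministicMatrix_apply (T : Matrix n n R) (u : n → n) (s t : n) :
    (T * deterministicMatrix R u) s t = ∑ x with u x = t, T s x := by
  simp [Matrix.mul_apply, deterministicMatrix, Finset.sum_filter, eq_comm]

theorem IsAbsorbing.exists_map_eq [Nontrivial R]
    (h : IsAbsorbing (T * deterministicMatrix R u) s) : ∃ x, u x = s := by
  by_contra! hu
  simpa [mul_deterministicMatrix_apply, hu] using h s

variable [PartialOrder R] [IsOrderedAddMonoid R]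

theorem IsAbsorbing.apply_eq_zero_of_map_ne (h : IsAbsorbing (T * deterministicMatrix R u) s)
    (hT : ∀ x, 0 ≤ T s x) (ht : u t ≠ s) : T s t = 0 := by
  have hsum : ∑ x with u x = u t, T s x = 0 := by
    rw [← mul_deterministicMatrix_apply, h, if_neg ht]
  exact (Finset.sum_eq_zero_iff_of_nonneg fun x _ => hT x).1 hsum t (by simp)

theorem IsAbsorbing.of_mul_deterministicMatrix (h : IsAbsorbing (T * deterministicMatrix R u) s)
    (hT : ∀ x, 0 ≤ T s x) (hu : ∀ x, u x = s ↔ x = s) : IsAbsorbing T s := by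
  intro t
  split_ifs with hts
  · simpa [mul_deterministicMatrix_apply, Finset.sum_filter, hu, hts] using h s
  · exact h.apply_eq_zero_of_map_ne hT (mt (hu t).1 hts)

end Absorbing

section Saturation

variable {α β R : Type*} [Fintype α] [Fintype β] [DecidableEq α] [DecidableEq β]
  [Semiring R] [PartialOrder R] {S : Matrix (α × β) (α × β) R} {e : α} {s t : α × β}

/-- Saturated states: along the transitions of `S`, the accumulator (second component) can no
longer change. -/
def IsSaturated (S : Matrix (α × β) (α × β) R) (s : α × β) : Prop :=
  ∀ (k : ℕ) (t : α × β), 0 < (S ^ k) s t → t.2 = s.2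

theorem IsAbsorbing.isSaturated (hs : IsAbsorbing S s) : IsSaturated S s := by
  intro k t ht
  by_contra hne
  rw [hs.pow k t, if_neg (mt (congrArg Prod.snd) hne)] at ht
  exact ht.false

/-- The map on states underlying `U`: it replaces the first component of saturated states by `e`,
which is `∅` for packet sets. -/
noncomputable def collapse (S : Matrix (α × β) (α × β) R) (e : α) (s : α × β) : α × β :=
  if IsSaturated S s then (e, s.2) else s

theorem collapse_mk_self (S : Matrix (α × β) (α × β) R) (e : α) (b : β) :
    collapse S e (e, b) = (e, b) :=
  ite_self _

theorem deterministicMatrix_collapse_apply (S : Matrix (α × β) (α × β) R) (e a a' : α) (b b' : β) :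
    deterministicMatrix R (collapse S e) (a, b) (a', b') =
      if b' = b ∧ ((IsSaturated S (a, b) ∧ a' = e) ∨ (¬ IsSaturated S (a, b) ∧ a' = a))
      then 1 else 0 := by
  by_cases hs : IsSaturated S (a, b) <;> simp [deterministicMatrix, collapse, hs, and_comm]

theorem collapse_eq_iff_of_fst_ne (hs : s.1 ≠ e) :
    collapse S e t = s ↔ t = s ∧ ¬ IsSaturated S s := by
  unfold collapse
  split_ifs <;> grind

theorem SU_absorbing_states_general [Nontrivial R] [IsOrderedAddMonoid R]
    (hS : ∀ s t, 0 ≤ S s t) (he : ∀ b, IsAbsorbing S (e, b)) (s : α × β) :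
    IsAbsorbing (S * deterministicMatrix R (collapse S e)) s ↔ s.1 = e := by
  constructor
  · intro h
    by_contra hs
    obtain ⟨x, hx⟩ := h.exists_map_eq
    have hunsat : ¬ IsSaturated S s := ((collapse_eq_iff_of_fst_ne hs).1 hx).2
    have hfibre : ∀ x, collapse S e x = s ↔ x = s := fun x => by
      rw [collapse_eq_iff_of_fst_ne hs, and_iff_left hunsat]
    exact hunsat (h.of_mul_deterministicMatrix (hS s) hfibre).isSaturated
  · obtain ⟨a, b⟩ := s
    rintro rfl
    exact (he b).mul (isAbsorbing_deterministicMatrix (collapse_mk_self S a b))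

end Saturation

section SmallStep

variable {α β R : Type*} [DecidableEq β] {f : α → β → β} {B : Matrix α α R}

/-- The small-step matrix of `B`, where the accumulator is updated by an arbitrary `f`; for
packet sets `f` is the union. -/
def smallStep [Zero R] (f : α → β → β) (B : Matrix α α R) : Matrix (α × β) (α × β) R :=
  .of fun s t => if t.2 = f s.1 s.2 then B s.1 t.1 else 0

theorem smallStep_nonneg [Zero R] [Preorder R] (hB : ∀ a a', 0 ≤ B a a') (s t : α × β) :
    0 ≤ smallStep f B s t := by
  simp only [smallStep, Matrix.of_apply]
  split_ifs
  exacts [hB _ _, le_rfl]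

theorem isAbsorbing_smallStep [DecidableEq α] [Zero R] [One R] {a : α} {b : β}
    (hB : IsAbsorbing B a) (hf : f a b = b) : IsAbsorbing (smallStep f B) (a, b) := by
  rintro ⟨a', b'⟩
  simp [smallStep, hf, hB a', Prod.ext_iff, and_comm, ← ite_and]

end SmallStep

/-- The absorbing states of `S·U` are exactly the states of the form `(∅, b)`. -/
theorem SU_absorbing_states {Pk : Type*} [Fintype Pk] [DecidableEq Pk]
    (B : Matrix (Finset Pk) (Finset Pk) ℝ)
    (hBnn : ∀ a a', 0 ≤ B a a')
    (hBrow : ∀ a, ∑ a', B a a' = 1)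
    (hBempty : ∀ c, B ∅ c = if c = ∅ then 1 else 0)
    (S U : Matrix (Finset Pk × Finset Pk) (Finset Pk × Finset Pk) ℝ)
    (hS : ∀ a b a' b', S (a, b) (a', b') = if b' = a ∪ b then B a a' else 0)
    (Saturated : Finset Pk × Finset Pk → Prop)
    (hSat : ∀ a b, Saturated (a, b) ↔
      ∀ (n : ℕ) (a' b' : Finset Pk), 0 < (S ^ n) (a, b) (a', b') → b' = b)
    (hU : ∀ a b a' b', U (a, b) (a', b') =
      if b' = b ∧ ((Saturated (a, b) ∧ a' = ∅) ∨ (¬ Saturated (a, b) ∧ a' = a))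
      then 1 else 0) :
    ∀ a b : Finset Pk,
      (∀ s', (S * U) (a, b) s' = if s' = (a, b) then 1 else 0) ↔ a = ∅ := by
  obtain rfl : S = smallStep (· ∪ ·) B := by
    ext ⟨a, b⟩ ⟨a', b'⟩
    exact hS a b a' b'
  obtain rfl : Saturated = IsSaturated (smallStep (· ∪ ·) B) := by
    ext ⟨a, b⟩
    simp [hSat, IsSaturated]
  obtain rfl : U = deterministicMatrix ℝ (collapse (smallStep (· ∪ ·) B) ∅) := by
    ext ⟨a, b⟩ ⟨a', b'⟩
    rw [hU, deterministicMatrix_collapse_apply]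
  intro a b
  have hempty (b : Finset Pk) : IsAbsorbing (smallStep (· ∪ ·) B) (∅, b) :=
    isAbsorbing_smallStep hBempty (Finset.empty_union b)
  exact SU_absorbing_states_general (smallStep_nonneg hBnn) hempty (a, b)
end

section
/- If M is substochastic and every state can reach a defective state, then, with n = |S| the cardinality of S, the matrix M^n is contractive in the L1 norm: there exists a constant c with 0 ≤ c < 1 such that for every vector y : S → ℝ, Σ_t |Σ_s y_s · (M^n)_{s,t}| ≤ c · Σ_s |y_s|. -/
/-!
Multiplying a nonnegative matrix on the right by a substochastic one never increases a row sum, and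
strictly decreases the sum of every row that has a positive entry at a defective state. So the row
sums of `M ^ k` decrease with `k`, starting from `1`, and the sum of row `s` is below `1` as soon
as `k` exceeds the length of some path from `s` to a defective state. By Cayley–Hamilton every
power of `M` is a linear combination of those with exponent less than `|S|`, so a path of length
less than `|S|` can be chosen. The contraction constant is the largest row sum of `M ^ |S|`.
-/

open Matrix

section RowSums

variable {R l m n : Type*} [Fintype m] [Fintype n]

theorem sum_row_mul [NonUnitalNonAssocSemiring R] (A : Matrix l m R) (B : Matrix m n R) (i : l) :
    ∑ k, (A * B) i k = ∑ j, A i j * ∑ k, B j k := by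
  simp only [mul_apply, Finset.mul_sum]
  exact Finset.sum_comm

theorem sum_row_mul_le [Semiring R] [PartialOrder R] [IsOrderedRing R]
    {A : Matrix l m R} {B : Matrix m n R} {i : l} (hA : ∀ j, 0 ≤ A i j)
    (hB : ∀ j, ∑ k, B j k ≤ 1) : ∑ k, (A * B) i k ≤ ∑ j, A i j := by
  rw [sum_row_mul]
  exact Finset.sum_le_sum fun j _ => mul_le_of_le_one_right (hA j) (hB j)

theorem sum_row_mul_lt [Semiring R] [PartialOrder R] [IsStrictOrderedRing R]
    {A : Matrix l m R} {B : Matrix m n R} {i : l} {j : m} (hA : ∀ j', 0 ≤ A i j')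
    (hB : ∀ j', ∑ k, B j' k ≤ 1) (hAj : 0 < A i j) (hBj : ∑ k, B j k < 1) :
    ∑ k, (A * B) i k < ∑ j, A i j := by
  rw [sum_row_mul]
  exact Finset.sum_lt_sum (fun j _ => mul_le_of_le_one_right (hA j) (hB j))
    ⟨j, Finset.mem_univ j, mul_lt_of_lt_one_right hAj hBj⟩

end RowSums

section Powers

variable {R S : Type*} [Fintype S] [DecidableEq S]

theorem antitone_sum_row_pow [Semiring R] [PartialOrder R] [IsOrderedRing R] {M : Matrix S S R}
    (hnn : ∀ s t, 0 ≤ M s t) (hsub : ∀ s, ∑ t, M s t ≤ 1) (s : S) :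
    Antitone fun k => ∑ t, (M ^ k) s t := by
  refine antitone_nat_of_succ_le fun k => ?_
  rw [pow_succ]
  exact sum_row_mul_le (pow_apply_nonneg hnn k s) hsub

theorem sum_row_pow_lt_one [Semiring R] [PartialOrder R] [IsStrictOrderedRing R]
    {M : Matrix S S R} (hnn : ∀ s t, 0 ≤ M s t) (hsub : ∀ s, ∑ t, M s t ≤ 1) {s t : S} {m k : ℕ}
    (ht : ∑ u, M t u < 1) (hst : 0 < (M ^ m) s t) (hmk : m < k) :
    ∑ u, (M ^ k) s u < 1 := by
  have hanti := antitone_sum_row_pow hnn hsub s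
  calc ∑ u, (M ^ k) s u ≤ ∑ u, (M ^ m * M) s u := by
        rw [← pow_succ]
        exact hanti hmk
    _ < ∑ u, (M ^ m) s u := sum_row_mul_lt (pow_apply_nonneg hnn m s) hsub hst ht
    _ ≤ ∑ u, (M ^ 0) s u := hanti m.zero_le
    _ = 1 := by simp [one_apply]

theorem exists_lt_card_pow_apply_ne_zero [CommRing R] {M : Matrix S S R} {s t : S} {n : ℕ}
    (h : (M ^ n) s t ≠ 0) : ∃ m < Fintype.card S, (M ^ m) s t ≠ 0 := by
  have : Nontrivial R := nontrivial_of_ne _ _ h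
  have hcard : M.charpoly.natDegree = Fintype.card S := M.charpoly_natDegree_eq_dim
  have hdeg : (Polynomial.X ^ n %ₘ M.charpoly).natDegree < Fintype.card S := by
    refine hcard ▸ Polynomial.natDegree_modByMonic_lt _ M.charpoly_monic fun h1 => ?_
    rw [h1, Polynomial.natDegree_one] at hcard
    exact (Fintype.card_pos_iff.mpr ⟨s⟩).ne hcard
  contrapose! h
  rw [pow_eq_aeval_mod_charpoly, Polynomial.aeval_eq_sum_range' hdeg, Matrix.sum_apply]
  refine Finset.sum_eq_zero fun m hm => ?_
  rw [Matrix.smul_apply, h m (Finset.mem_range.mp hm), smul_zero]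

end Powers

theorem sum_abs_vecMul_le {R m n : Type*} [Fintype m] [Fintype n] [Ring R] [LinearOrder R]
    [IsOrderedRing R] {A : Matrix m n R} {c : R} (hA : ∀ i, ∑ j, |A i j| ≤ c) (y : m → R) :
    ∑ j, |(y ᵥ* A) j| ≤ (∑ i, |y i|) * c :=
  calc ∑ j, |(y ᵥ* A) j| ≤ ∑ j, ∑ i, |y i| * |A i j| :=
        Finset.sum_le_sum fun j _ => (Finset.abs_sum_le_sum_abs _ _).trans_eq <|
          Finset.sum_congr rfl fun i _ => abs_mul _ _
    _ = ∑ i, |y i| * ∑ j, |A i j| := by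
        simp only [Finset.mul_sum]
        exact Finset.sum_comm
    _ ≤ ∑ i, |y i| * c :=
        Finset.sum_le_sum fun i _ => mul_le_mul_of_nonneg_left (hA i) (abs_nonneg _)
    _ = (∑ i, |y i|) * c := (Finset.sum_mul _ _ _).symm

theorem exists_lt_forall_le_of_forall_lt {ι α : Type*} [Finite ι] [LinearOrder α] {f : ι → α}
    {a b : α} (hab : a < b) (hf : ∀ i, f i < b) : ∃ c, a ≤ c ∧ c < b ∧ ∀ i, f i ≤ c := by
  have := Fintype.ofFinite ι
  obtain ⟨ha, hle⟩ := (Finset.fold_max_le (Finset.univ.fold max a f)).mp le_rfl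
  exact ⟨_, ha, (Finset.fold_max_lt b).mpr ⟨hab, fun i _ => hf i⟩, fun i => hle i (by simp)⟩

theorem pow_card_contractive_general {R S : Type*} [CommRing R] [LinearOrder R]
    [IsStrictOrderedRing R] [Fintype S] [DecidableEq S] (M : Matrix S S R)
    (hnn : ∀ s t, 0 ≤ M s t) (hsub : ∀ s, ∑ t, M s t ≤ 1)
    (hreach : ∀ s, ∃ (n : ℕ) (t : S), (∑ u, M t u < 1) ∧ 0 < (M ^ n) s t)
    {k : ℕ} (hk : Fintype.card S ≤ k) :
    ∃ c : R, 0 ≤ c ∧ c < 1 ∧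
      ∀ y : S → R, ∑ t, |∑ s, y s * (M ^ k) s t| ≤ c * ∑ s, |y s| := by
  have hlt : ∀ s, ∑ t, (M ^ k) s t < 1 := fun s => by
    obtain ⟨n, t, ht, hst⟩ := hreach s
    obtain ⟨m, hm, hne⟩ := exists_lt_card_pow_apply_ne_zero hst.ne'
    have hpos : 0 < (M ^ m) s t := (pow_apply_nonneg hnn m s t).lt_of_ne' hne
    exact sum_row_pow_lt_one hnn hsub ht hpos (hm.trans_le hk)
  obtain ⟨c, hc0, hc1, hc⟩ := exists_lt_forall_le_of_forall_lt zero_lt_one hlt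
  refine ⟨c, hc0, hc1, fun y => ?_⟩
  rw [mul_comm]
  refine sum_abs_vecMul_le (fun s => ?_) y
  simpa only [abs_of_nonneg (pow_apply_nonneg hnn k s _)] using hc s

/-- If `M` is substochastic and every state can reach a defective state, then with
`n = |S|`, the matrix `M ^ n` is contractive in the `L1` norm. -/
theorem pow_card_contractive {S : Type*} [Fintype S] [DecidableEq S]
    (M : Matrix S S ℝ)
    (hnn : ∀ s t, 0 ≤ M s t)
    (hsub : ∀ s, ∑ t, M s t ≤ 1)
    (hreach : ∀ s, ∃ (n : ℕ) (t : S), (∑ u, M t u < 1) ∧ 0 < (M ^ n) s t) :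
    ∃ c : ℝ, 0 ≤ c ∧ c < 1 ∧
      ∀ y : S → ℝ,
        ∑ t, |∑ s, y s * (M ^ Fintype.card S) s t| ≤ c * ∑ s, |y s| :=
  pow_card_contractive_general M hnn hsub hreach le_rfl
end
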